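/- Let r,q ≥ 1 with rq > 1. Then the permutation σ_{rq} is Morse, i.e., all its Morse numbers satisfy i_j ≥ 0. Moreover, writing μ_{rq}(i) := #{ j ∈ {1,…,N} : i_j = i }, one has: μ_{rq}(i) = 3+2i for 0 ≤ i < min{r,q}; μ_{rq}(i) = 2+2·min{r,q} for min{r,q} ≤ i < max{r,q}; μ_{rq}(i) = 2(r+q)+1−2i for max{r,q} ≤ i ≤ r+q; and μ_{rq}(i) = 0 for i > r+q. -/

import Mathlib

/-- Morse numbers `i_j` of a permutation `σ` of `{1,…,N}` (extended to `ℕ`),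
via the recursion `i_1 = 0`,
`i_{j+1} = i_j + (-1)^(j+1) * sign (σ⁻¹(j+1) - σ⁻¹(j))`. -/
def morse (σ : Equiv.Perm ℕ) : ℕ → ℤ
  | 0 => 0
  | 1 => 0
  | (j+2) => morse σ (j+1) +
      (-1)^(j+2) * Int.sign ((σ.symm (j+2) : ℤ) - (σ.symm (j+1) : ℤ))

/-- Zero numbers `z_{j k}`, recursion in the first index `j`, second index `k` fixed:
`z_{1k} = 0`, `z_{kk} = i_k`, `z_{k+1,k} = min (i_k, i_{k+1})`, and otherwise
`z_{j+1,k} = z_{jk} + ((-1)^(j+1)/2) * (sign (σ⁻¹(j+1) - σ⁻¹(k)) - sign (σ⁻¹(j) - σ⁻¹(k)))`. -/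
def zrec (σ : Equiv.Perm ℕ) (k : ℕ) : ℕ → ℤ
  | 0 => 0
  | 1 => 0
  | (j+2) =>
      if j+2 = k then morse σ k
      else if j+1 = k then min (morse σ k) (morse σ (k+1))
      else zrec σ k (j+1) +
        ((-1)^(j+2) * (Int.sign ((σ.symm (j+2) : ℤ) - (σ.symm k : ℤ))
          - Int.sign ((σ.symm (j+1) : ℤ) - (σ.symm k : ℤ)))) / 2

/-- The zero number `z_{m n}`. -/
def zfun (σ : Equiv.Perm ℕ) (m n : ℕ) : ℤ := zrec σ n m

/-- The connection digraph of a dissipative Morse permutation `σ` of `{1,…,N}`: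
an edge `m ⤳ n` iff `i_m = i_n + 1` and no `w` strictly between `m` and `n`
blocks, i.e. satisfies `z_{mw} = z_{wn} = z_{mn}`. -/
def hasEdge (N : ℕ) (σ : Equiv.Perm ℕ) (m n : ℕ) : Prop :=
  1 ≤ m ∧ m ≤ N ∧ 1 ≤ n ∧ n ≤ N ∧
  morse σ m = morse σ n + 1 ∧
  ¬ ∃ w : ℕ, min m n < w ∧ w < max m n ∧
      zfun σ m w = zfun σ w n ∧ zfun σ w n = zfun σ m n

/-- A dissipative permutation of `{1,…,N}`. -/
def Dissipative (N : ℕ) (σ : Equiv.Perm ℕ) : Prop :=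
  Set.BijOn σ (Set.Icc 1 N) (Set.Icc 1 N) ∧ σ 1 = 1 ∧ σ N = N

/-- The Morse property: all Morse numbers are nonnegative. -/
def MorseProp (N : ℕ) (σ : Equiv.Perm ℕ) : Prop :=
  ∀ j, 1 ≤ j → j ≤ N → 0 ≤ morse σ j

/-- Morse counts `μ(i) = #{j ∈ {1,…,N} : i_j = i}`. -/
def morseCount (N : ℕ) (σ : Equiv.Perm ℕ) (i : ℤ) : ℕ :=
  ((Finset.Icc 1 N).filter (fun j => morse σ j = i)).card

/-- The primitive 3-nose permutation `σ_{rq}` of `{1,…,N}`, `N = 2(r+1)(q+1)-1`,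
characterized by its defining relations, extended to a permutation of `ℕ`
fixing everything outside `{1,…,N}`. -/
def SigmaRQ (r q : ℕ) (σ : Equiv.Perm ℕ) : Prop :=
  (∀ a, a ∉ Set.Icc 1 (2*(r+1)*(q+1) - 1) → σ a = a) ∧
  (∀ j k, j ≤ r → k ≤ q →
    σ (2*((q+1)*j+k)+1) = 2*(j+(r+1)*k)+1) ∧
  (∀ j k, j ≤ r → k ≤ q → ¬(j = 0 ∧ k = 0) →
    σ (2*((q+1)*(r-j)+(q-k)+1)) = 2*(j+(r+1)*k))

/-- Tags `A`, `B` of equilibrium labels `A^j_k`, `B^j_k`. -/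
inductive Tag | A | B
deriving DecidableEq

/-- The axis position (`h_1`-position) of the label `L^j_k` for parameters `(r,q)`. -/
def axisPos (r q : ℕ) : Tag → ℕ → ℕ → ℕ
  | Tag.A, j, k => if Odd j then (q+1)*(j-1)+k+1 else (q+1)*(2*r+1-j)+(q-k)+1
  | Tag.B, j, k => if Odd j then (q+1)*j+(q-k)+1 else (q+1)*(2*r-j)+k+1

/-- The meander position (`h_0`-position) of the label `L^j_k` for parameters `(r,q)`. -/
def meanderPos (r q : ℕ) : Tag → ℕ → ℕ → ℕ
  | Tag.A, j, k => if Odd k then (r+1)*(2*q+1-k)+(2*r+1-j) else (r+1)*k+j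
  | Tag.B, j, k => if Odd k then (r+1)*(2*q+1-k)+j else (r+1)*(k+1)+(r-j)

/-- The suspension `σ̃` of a dissipative permutation `σ` of `{1,…,N}`:
`σ̃(1) = 1`, `σ̃(N+2) = N+2`, and `σ̃(a+1) = N+2 - σ(a)` for `1 ≤ a ≤ N`. -/
def IsSuspension (N : ℕ) (σ σt : Equiv.Perm ℕ) : Prop :=
  σt 1 = 1 ∧ σt (N+2) = N+2 ∧ ∀ a, 1 ≤ a → a ≤ N → σt (a+1) = N+2 - σ a

/-- The label `A^0_0` is the distinguished (formal) vertex `⋆`. -/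
def IsStar (L : Tag) (j k : ℕ) : Prop := L = Tag.A ∧ j = 0 ∧ k = 0

/-- Tag swap `A ↔ B`, used by the reversor. -/
def tagSwap : Tag → Tag
  | Tag.A => Tag.B
  | Tag.B => Tag.A

def fold3 (r j : ℕ) : ℕ := if 2*j ≤ r then 2*j else 2*(r-j)+1

def hh (r q j k : ℕ) : ℕ := (if 2*k ≤ q then fold3 r j else fold3 r (r-j)) + fold3 q k

def AA (r q j k : ℕ) : ℤ := 2*(((hh r q j k + 1)/2 : ℕ) : ℤ) - 1
def BB (r q j k : ℕ) : ℤ := 2*((hh r q j k /2 : ℕ) : ℤ)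

theorem sign_pos' {a : ℤ} (h : 0 < a) : Int.sign a = 1 := Int.sign_eq_one_of_pos h
theorem sign_neg' {a : ℤ} (h : a < 0) : Int.sign a = -1 := Int.sign_eq_neg_one_of_neg h

section
variable {r q : ℕ} {σ : Equiv.Perm ℕ}

theorem symm_odd (hσ : SigmaRQ r q σ) {j k : ℕ} (hj : j ≤ r) (hk : k ≤ q) :
    σ.symm (2*(j+(r+1)*k)+1) = 2*((q+1)*j+k)+1 := by
  rw [Equiv.symm_apply_eq, hσ.2.1 j k hj hk]

theorem symm_even (hσ : SigmaRQ r q σ) {j k : ℕ} (hj : j ≤ r) (hk : k ≤ q)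
    (h0 : ¬ (j = 0 ∧ k = 0)) :
    (σ.symm (2*(j+(r+1)*k)) : ℤ) = 2*((r+1)*(q+1) - ((q+1)*j+k)) := by
  have : σ.symm (2*(j+(r+1)*k)) = 2*((q+1)*(r-j)+(q-k)+1) := by
    rw [Equiv.symm_apply_eq, hσ.2.2 j k hj hk h0]
  rw [this]
  push_cast [Nat.cast_sub hj, Nat.cast_sub hk]
  ring

theorem morse_odd_step (n : ℕ) (hn : 0 < n) : morse σ (2*n+1) = morse σ (2*n) -
    Int.sign ((σ.symm (2*n+1) : ℤ) - σ.symm (2*n)) := by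
  obtain ⟨m, rfl⟩ : ∃ m, n = m+1 := ⟨n-1, by omega⟩
  have : 2*(m+1)+1 = (2*m+1)+2 := by ring
  rw [this, morse]
  have e : (-1:ℤ)^(2*m+1+2) = -1 := Odd.neg_one_pow ⟨m+1, by ring⟩
  rw [e]
  have : 2*(m+1) = 2*m+1+1 := by ring
  rw [this]; ring

theorem morse_even_step (n : ℕ) : morse σ (2*(n+1)) = morse σ (2*n+1) +
    Int.sign ((σ.symm (2*(n+1)) : ℤ) - σ.symm (2*n+1)) := by
  have : 2*(n+1) = (2*n)+2 := by ring
  rw [this, morse]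
  have e : (-1:ℤ)^(2*n+2) = 1 := Even.neg_one_pow ⟨n+1, by ring⟩
  rw [e]; ring

theorem L1 (hσ : SigmaRQ r q σ) {j k : ℕ} (hj : j ≤ r) (hk : k ≤ q)
    (h0 : ¬ (j = 0 ∧ k = 0)) (h : morse σ (2*(j+(r+1)*k)) = AA r q j k) :
    morse σ (2*(j+(r+1)*k)+1) = BB r q j k := by
  have hn : 0 < j + (r+1)*k := by
    rcases Nat.eq_zero_or_pos k with rfl | hk'
    · omega
    · positivity
  rw [morse_odd_step _ hn, h, symm_odd hσ hj hk, symm_even hσ hj hk h0]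
  by_cases hc : (if 2*k ≤ q then 2*j ≤ r else 2*j < r)
  · rw [sign_neg']
    · simp only [AA, BB, hh, fold3]; split_ifs at hc ⊢ <;> omega
    · push_cast
      split_ifs at hc <;> zify at * <;> nlinarith
  · rw [sign_pos']
    · simp only [AA, BB, hh, fold3]; split_ifs at hc ⊢ <;> omega
    · push_cast
      split_ifs at hc <;> zify at * <;> nlinarith

theorem L2 (hσ : SigmaRQ r q σ) {j k : ℕ} (hj : j + 1 ≤ r) (hk : k ≤ q)
    (h : morse σ (2*(j+(r+1)*k)+1) = BB r q j k) :
    morse σ (2*((j+1)+(r+1)*k)) = AA r q (j+1) k := by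
  have e : (j+1)+(r+1)*k = (j+(r+1)*k)+1 := by ring
  have := symm_even hσ hj hk (by omega)
  rw [e] at this ⊢
  rw [morse_even_step, h, this, symm_odd hσ (by omega) hk]
  by_cases hc : (if 2*k ≤ q then 2*j < r else 2*j+1 < r)
  · rw [sign_pos']
    · simp only [AA, BB, hh, fold3]; split_ifs at hc ⊢ <;> omega
    · push_cast
      split_ifs at hc <;> zify at * <;> nlinarith
  · rw [sign_neg']
    · simp only [AA, BB, hh, fold3]; split_ifs at hc ⊢ <;> omega
    · push_cast
      split_ifs at hc <;> zify at * <;> nlinarith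

theorem L3 (hσ : SigmaRQ r q σ) (hr : 1 ≤ r) {k : ℕ} (hk : k + 1 ≤ q)
    (h : morse σ (2*(r+(r+1)*k)+1) = BB r q r k) :
    morse σ (2*(0+(r+1)*(k+1))) = AA r q 0 (k+1) := by
  have e : 0+(r+1)*(k+1) = (r+(r+1)*k)+1 := by ring
  have := symm_even hσ (Nat.zero_le r) hk (by omega)
  rw [e] at this ⊢
  rw [morse_even_step, h, this, symm_odd hσ le_rfl (by omega)]
  by_cases hc : 2*k < q
  · rw [sign_pos']
    · simp only [AA, BB, hh, fold3]; split_ifs <;> omega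
    · push_cast
      zify at *; nlinarith
  · rw [sign_neg']
    · simp only [AA, BB, hh, fold3]; split_ifs <;> omega
    · push_cast
      zify at *; nlinarith

theorem row (hσ : SigmaRQ r q σ) {k : ℕ} (hk : k ≤ q)
    (h : morse σ (2*(0+(r+1)*k)+1) = BB r q 0 k) (j : ℕ) (hj : j ≤ r) :
    morse σ (2*(j+(r+1)*k)+1) = BB r q j k := by
  induction j with
  | zero => exact h
  | succ j ih => exact L1 hσ hj hk (by omega) (L2 hσ hj hk (ih (by omega)))

theorem start (hσ : SigmaRQ r q σ) (hr : 1 ≤ r) (k : ℕ) (hk : k ≤ q) :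
    morse σ (2*(0+(r+1)*k)+1) = BB r q 0 k := by
  induction k with
  | zero => simp [morse, BB, hh, fold3]
  | succ k ih =>
    exact L1 hσ (Nat.zero_le r) hk (by omega)
      (L3 hσ hr hk (row hσ (by omega) (ih (by omega)) r le_rfl))

theorem morseB (hσ : SigmaRQ r q σ) (hr : 1 ≤ r) {j k : ℕ} (hj : j ≤ r) (hk : k ≤ q) :
    morse σ (2*(j+(r+1)*k)+1) = BB r q j k :=
  row hσ hk (start hσ hr k hk) j hj

theorem morseA (hσ : SigmaRQ r q σ) (hr : 1 ≤ r) {j k : ℕ} (hj : j ≤ r) (hk : k ≤ q)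
    (h0 : ¬ (j = 0 ∧ k = 0)) :
    morse σ (2*(j+(r+1)*k)) = AA r q j k := by
  rcases j with _ | j
  · rcases k with _ | k
    · omega
    · exact L3 hσ hr hk (morseB hσ hr le_rfl (by omega))
  · exact L2 hσ hj hk (morseB hσ hr (by omega) hk)

end

theorem sum_pairs (f : ℕ → ℕ) (M : ℕ) :
    ∑ p ∈ Finset.range (2*M), f p = ∑ n ∈ Finset.range M, (f (2*n) + f (2*n+1)) := by
  induction M with
  | zero => simp
  | succ M ih =>
    rw [show 2*(M+1) = 2*M+1+1 by ring, Finset.sum_range_succ, Finset.sum_range_succ, ih,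
      Finset.sum_range_succ]
    ring

theorem sum_rows (f : ℕ → ℕ) (a b : ℕ) :
    ∑ n ∈ Finset.range (a*b), f n
      = ∑ k ∈ Finset.range b, ∑ j ∈ Finset.range a, f (j + a*k) := by
  induction b with
  | zero => simp
  | succ b ih =>
    rw [Nat.mul_succ, Finset.sum_range_add, ih, Finset.sum_range_succ]
    simp [add_comm]

theorem sum_fold (f : ℕ → ℕ) (r : ℕ) :
    ∑ j ∈ Finset.range (r+1), f (fold3 r j) = ∑ x ∈ Finset.range (r+1), f x := by
  refine Finset.sum_bij' (fun j _ => fold3 r j)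
    (fun x _ => if x % 2 = 0 then x/2 else r - x/2) ?_ ?_ ?_ ?_ ?_
  · intro j hj; simp only [fold3, Finset.mem_range] at *; split_ifs <;> omega
  · intro j hj; simp only [Finset.mem_range] at *; split_ifs <;> omega
  · intro j hj; simp only [fold3, Finset.mem_range] at *; split_ifs <;> omega
  · intro j hj; simp only [fold3, Finset.mem_range] at *; split_ifs <;> omega
  · intro j hj; rfl

theorem sum_hh (f : ℕ → ℕ) (r q : ℕ) :
    ∑ k ∈ Finset.range (q+1), ∑ j ∈ Finset.range (r+1), f (hh r q j k)
      = ∑ y ∈ Finset.range (q+1), ∑ x ∈ Finset.range (r+1), f (x + y) := by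
  rw [← sum_fold (fun y => ∑ x ∈ Finset.range (r+1), f (x + y)) q]
  refine Finset.sum_congr rfl fun k _ => ?_
  rw [← sum_fold (fun x => f (x + fold3 q k)) r]
  by_cases hk : 2*k ≤ q
  · simp [hh, hk]
  · rw [← Finset.sum_range_reflect (fun j => f (fold3 r j + fold3 q k))]
    simp [hh, hk]

theorem box_count (r q i : ℕ) :
    ∑ y ∈ Finset.range (q+1), ∑ x ∈ Finset.range (r+1), (if x + y = i then 1 else 0)
      = min i q + 1 - (i - r) := by
  have h1 : ∀ y, ∑ x ∈ Finset.range (r+1), (if x + y = i then 1 else 0)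
      = if y ≤ i ∧ i ≤ y + r then 1 else 0 := by
    intro y
    by_cases hy : y ≤ i
    · have : ∀ x, (x + y = i) ↔ (i - y = x) := by intro x; omega
      simp only [this, Finset.sum_ite_eq, Finset.mem_range]
      split_ifs <;> omega
    · rw [Finset.sum_eq_zero]
      · simp [hy]
      · intro x _; rw [if_neg]; omega
  simp only [h1]
  rw [← Finset.card_filter]
  have : (Finset.range (q+1)).filter (fun y => y ≤ i ∧ i ≤ y + r)
      = Finset.Icc (i - r) (min i q) := by
    ext y; simp; omega
  rw [this, Nat.card_Icc]

theorem pair_count (r q j k i : ℕ) :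
    (if AA r q j k = (i:ℤ) then 1 else 0) + (if BB r q j k = (i:ℤ) then 1 else 0)
      = (if hh r q j k = i then 1 else 0) + (if hh r q j k = i + 1 then 1 else 0) := by
  have hA : AA r q j k = 2*(((hh r q j k + 1)/2 : ℕ) : ℤ) - 1 := rfl
  have hB : BB r q j k = 2*((hh r q j k /2 : ℕ) : ℤ) := rfl
  split_ifs <;> omega

theorem count_eq (r q : ℕ) (hr : 1 ≤ r) (σ : Equiv.Perm ℕ) (hσ : SigmaRQ r q σ) (i : ℕ) :
    morseCount (2*(r+1)*(q+1)-1) σ i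
      = (min i q + 1 - (i - r)) + (min (i+1) q + 1 - (i + 1 - r)) := by
  have e : (Finset.Icc 1 (2*(r+1)*(q+1)-1)).filter (fun j => morse σ j = (i:ℤ))
      = (Finset.range (2*((r+1)*(q+1)))).filter (fun p => 0 < p ∧ morse σ p = (i:ℤ)) := by
    have : 0 < (r+1)*(q+1) := by positivity
    ext p
    simp only [Finset.mem_filter, Finset.mem_Icc, Finset.mem_range, mul_assoc]
    constructor
    · rintro ⟨⟨h1, h2⟩, h3⟩; exact ⟨by omega, by omega, h3⟩
    · rintro ⟨h1, h2, h3⟩; exact ⟨⟨by omega, by omega⟩, h3⟩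
  rw [morseCount, e, Finset.card_filter, sum_pairs, sum_rows, ← box_count, ← box_count,
    ← sum_hh (fun h => if h = i then 1 else 0), ← sum_hh (fun h => if h = i+1 then 1 else 0),
    ← Finset.sum_add_distrib]
  refine Finset.sum_congr rfl fun k hk => ?_
  rw [← Finset.sum_add_distrib]
  refine Finset.sum_congr rfl fun j hj => ?_
  rw [Finset.mem_range] at hj hk
  rw [← pair_count, morseB hσ hr (by omega) (by omega)]
  congr 1
  · by_cases h0 : j = 0 ∧ k = 0
    · obtain ⟨rfl, rfl⟩ := h0
      have : AA r q 0 0 ≠ (i:ℤ) := by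
        simp [AA, hh, fold3]
      simp [this]
    · rw [morseA hσ hr (by omega) (by omega) h0]
      have : 0 < 2*(j+(r+1)*k) := by
        rcases Nat.eq_zero_or_pos k with rfl | hk'
        · omega
        · positivity
      simp only [this, true_and]
  · simp

theorem morse_nonneg (r q : ℕ) (hr : 1 ≤ r) (σ : Equiv.Perm ℕ) (hσ : SigmaRQ r q σ) :
    MorseProp (2*(r+1)*(q+1)-1) σ := by
  intro p hp hp'
  have hM : 0 < (r+1)*(q+1) := by positivity
  rw [mul_assoc] at hp'
  have hn : p/2 < (r+1)*(q+1) := by omega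
  have hk : p/2/(r+1) < q+1 := Nat.div_lt_of_lt_mul hn
  have hj : p/2%(r+1) < r+1 := Nat.mod_lt _ (by omega)
  have hd := Nat.mod_add_div (p/2) (r+1)
  generalize p/2%(r+1) = j at *
  generalize p/2/(r+1) = k at *
  rcases Nat.mod_two_eq_zero_or_one p with h | h
  · have e : p = 2*(j+(r+1)*k) := by omega
    have h0 : ¬ (j = 0 ∧ k = 0) := by
      rintro ⟨rfl, rfl⟩; simp at e; omega
    rw [e, morseA hσ hr (by omega) (by omega) h0]
    simp only [AA, hh, fold3]; split_ifs <;> omega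
  · have e : p = 2*(j+(r+1)*k)+1 := by omega
    rw [e, morseB hσ hr (by omega) (by omega)]
    simp only [BB]; positivity

/-- `σ_{rq}` is Morse, with the explicit Morse counts `μ_{rq}`. -/
theorem stmt_2 (r q : ℕ) (hr : 1 ≤ r) (hq : 1 ≤ q) (hrq : 1 < r*q)
    (σ : Equiv.Perm ℕ) (hσ : SigmaRQ r q σ) :
    MorseProp (2*(r+1)*(q+1)-1) σ ∧
    (∀ i : ℕ, i < min r q →
      morseCount (2*(r+1)*(q+1)-1) σ i = 3 + 2*i) ∧
    (∀ i : ℕ, min r q ≤ i → i < max r q →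
      morseCount (2*(r+1)*(q+1)-1) σ i = 2 + 2*(min r q)) ∧
    (∀ i : ℕ, max r q ≤ i → i ≤ r+q →
      morseCount (2*(r+1)*(q+1)-1) σ i = 2*(r+q)+1-2*i) ∧
    (∀ i : ℕ, r+q < i →
      morseCount (2*(r+1)*(q+1)-1) σ i = 0) := by
  refine ⟨morse_nonneg r q hr σ hσ, ?_, ?_, ?_, ?_⟩
  all_goals
    intros
    rw [count_eq r q hr σ hσ]
    omega
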